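/- Let n ≥ 1, d ≥ 2 and 1 ≤ k ≤ d/2. There exists a nonempty Zariski-open subset U_{d,k} of R_d = ℂ[x_0,…,x_n]_d such that for every f ∈ U_{d,k}: dim_ℂ M^k(f)_i = C(n+i, n) for all i < d−k, and dim_ℂ M^k(f)_{d−k} = C(n+d−k, n) − C(n+k, n). -/

import Mathlib

/-! The partials `∂^α f`, `|α| = k`, of a form `f` of degree `d` are forms of degree `d - k`, so
`J^k(f)` vanishes below degree `d - k`, and in degree `d - k` it is their linear span. It therefore
suffices that, for `f` outside a hypersurface, these partials are linearly independent.

Normalise the coefficients by `β! · coeff β f` (`normCoeff`); then `∂^α` acts as the shift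
`β ↦ α + β` (`normCoeff_pd`). The partials are independent as soon as the square matrix with entries
`normCoeff (α + α' + (d - 2k)e₀) f`, `|α| = |α'| = k`, is invertible; `P` is its determinant.

The determinant is nonzero at the form `f₀` whose normalised coefficients are the moments
`∑ p^γ` over the grid of points `p ∈ {1, …, k+1}^{n+1}`. Indeed, if a vector `c` is killed by the
matrix and `g = ∑ c_α x^α`, pairing with `conj c` gives `∑_p p₀^{d-2k} |g(p)|² = 0`; so `g` vanishes
on the grid, and, having degree at most `k` in each variable, is zero. -/

open MvPolynomial Module

/-- The differential operator `∂^α` on `ℂ[x_0,…,x_{N-1}]` given by a multi-index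
`α : Fin N → ℕ`. -/
noncomputable def pd {N : ℕ} (α : Fin N → ℕ) :
    Module.End ℂ (MvPolynomial (Fin N) ℂ) :=
  (List.ofFn fun i =>
    ((MvPolynomial.pderiv (R := ℂ) i).toLinearMap :
      Module.End ℂ (MvPolynomial (Fin N) ℂ)) ^ (α i)).prod

/-- The `k`-th order Jacobian ideal `J^k(f)`, generated by all partial
derivatives `∂^α f` with `|α| = k`. -/
noncomputable def milnorIdeal {N : ℕ} (f : MvPolynomial (Fin N) ℂ) (k : ℕ) :
    Ideal (MvPolynomial (Fin N) ℂ) :=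
  Ideal.span {g | ∃ α : Fin N → ℕ, (∑ i, α i) = k ∧ g = pd α f}

/-- The degree-`m` graded piece of the quotient `R ⧸ I`, namely the image of the
space of homogeneous polynomials of degree `m`. -/
noncomputable def gradedPiece {N : ℕ} (I : Ideal (MvPolynomial (Fin N) ℂ)) (m : ℕ) :
    Submodule ℂ (MvPolynomial (Fin N) ℂ ⧸ I) :=
  Submodule.map (Ideal.Quotient.mkₐ ℂ I).toLinearMap (homogeneousSubmodule (Fin N) ℂ m)

/-! ### Partial derivatives and graded pieces -/

section Helpers

variable {N : ℕ}

/-- The coefficient of `x^β` in `f`, multiplied by `β! = ∏ i, (β i)!`. -/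
noncomputable def normCoeff (β : Fin N →₀ ℕ) (f : MvPolynomial (Fin N) ℂ) : ℂ :=
  (∏ i, ((β i).factorial : ℂ)) * coeff β f

lemma factorial_prod_ne_zero (β : Fin N →₀ ℕ) : (∏ i, ((β i).factorial : ℂ)) ≠ 0 :=
  Finset.prod_ne_zero_iff.2 fun i _ => by exact_mod_cast Nat.factorial_ne_zero _

lemma normCoeff_pderiv (β : Fin N →₀ ℕ) (i : Fin N) (f : MvPolynomial (Fin N) ℂ) :
    normCoeff β (pderiv i f) = normCoeff (Finsupp.single i 1 + β) f := by
  unfold normCoeff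
  rw [coeff_pderiv, add_comm (Finsupp.single i 1) β]
  have h : (∏ j, (((β + Finsupp.single i 1 : Fin N →₀ ℕ) j).factorial : ℂ))
      = (∏ j, ((β j).factorial : ℂ)) * (β i + 1) := by
    rw [← Finset.mul_prod_erase _ _ (Finset.mem_univ i),
      ← Finset.mul_prod_erase _ (fun j => ((β j).factorial : ℂ)) (Finset.mem_univ i)]
    have h2 : ∀ j ∈ Finset.univ.erase i, (((β + Finsupp.single i 1 : Fin N →₀ ℕ) j).factorial : ℂ)
        = ((β j).factorial : ℂ) := by
      intro j hj
      have : i ≠ j := (Finset.ne_of_mem_erase hj).symm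
      simp [this]
    rw [Finset.prod_congr rfl h2]
    simp [Nat.factorial_succ]
    ring
  rw [h]; ring

lemma normCoeff_pderiv_pow (a : ℕ) (β : Fin N →₀ ℕ) (i : Fin N) (f : MvPolynomial (Fin N) ℂ) :
    normCoeff β ((((pderiv (R := ℂ) i).toLinearMap :
      Module.End ℂ (MvPolynomial (Fin N) ℂ)) ^ a) f) = normCoeff (Finsupp.single i a + β) f := by
  induction a generalizing β with
  | zero => simp
  | succ a ih =>
    rw [pow_succ', Module.End.mul_apply, Derivation.coeFn_coe, normCoeff_pderiv, ih, ← add_assoc,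
      ← Finsupp.single_add]

lemma normCoeff_list (α : Fin N → ℕ) (l : List (Fin N)) (β : Fin N →₀ ℕ)
    (f : MvPolynomial (Fin N) ℂ) :
    normCoeff β ((l.map fun i => ((pderiv (R := ℂ) i).toLinearMap :
      Module.End ℂ (MvPolynomial (Fin N) ℂ)) ^ (α i)).prod f)
      = normCoeff ((l.map fun i => Finsupp.single i (α i)).sum + β) f := by
  induction l generalizing β with
  | nil => simp
  | cons i l ih =>
    simp only [List.map_cons, List.prod_cons, List.sum_cons, Module.End.mul_apply]
    rw [normCoeff_pderiv_pow, ih]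
    congr 1
    abel

/-- On normalised coefficients, `∂^α` is the shift by `α`. -/
lemma normCoeff_pd (α : Fin N →₀ ℕ) (β : Fin N →₀ ℕ) (f : MvPolynomial (Fin N) ℂ) :
    normCoeff β (pd α f) = normCoeff (α + β) f := by
  unfold pd
  rw [List.ofFn_eq_map, normCoeff_list, ← List.ofFn_eq_map, List.sum_ofFn,
    Finsupp.univ_sum_single α]

lemma normCoeff_eq_zero_iff (β : Fin N →₀ ℕ) (f : MvPolynomial (Fin N) ℂ) :
    normCoeff β f = 0 ↔ coeff β f = 0 := by
  simp only [normCoeff, mul_eq_zero, factorial_prod_ne_zero, false_or]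

lemma pd_isHomogeneous {d k : ℕ} (α : Fin N →₀ ℕ) (hα : α.degree = k)
    {f : MvPolynomial (Fin N) ℂ} (hf : f.IsHomogeneous d) :
    (pd α f).IsHomogeneous (d - k) := by
  intro β hβ
  change Finsupp.weight (fun _ => 1) β = d - k
  rw [← Finsupp.degree_eq_weight_one]
  by_contra hne
  apply hβ
  rw [← normCoeff_eq_zero_iff, normCoeff_pd, normCoeff_eq_zero_iff]
  apply hf.coeff_eq_zero
  rw [map_add]
  change β.degree ≠ d - k at hne
  omega

lemma normCoeff_sum {ι : Type*} (s : Finset ι) (c : ι → ℂ) (g : ι → MvPolynomial (Fin N) ℂ)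
    (β : Fin N →₀ ℕ) : normCoeff β (∑ a ∈ s, c a • g a) = ∑ a ∈ s, c a * normCoeff β (g a) := by
  simp only [normCoeff, coeff_sum, coeff_smul, Finset.mul_sum, smul_eq_mul]
  exact Finset.sum_congr rfl fun _ _ => by ring

/-- The exponents of the monomials of degree `m` in `N` variables. -/
abbrev Expo (N m : ℕ) : Type := {x // x ∈ (Finset.univ : Finset (Fin N)).finsuppAntidiag m}

lemma mem_expo {m : ℕ} {β : Fin N →₀ ℕ} :
    β ∈ (Finset.univ : Finset (Fin N)).finsuppAntidiag m ↔ β.degree = m := by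
  simp [Finset.mem_finsuppAntidiag, Finsupp.degree_eq_sum]

lemma card_expo (n m : ℕ) : Fintype.card (Expo (n + 1) m) = Nat.choose (n + m) n := by
  rw [Fintype.card_coe, Finset.card_finsuppAntidiag_nat_eq_choose]
  simp only [Finset.card_univ, Fintype.card_fin]
  have : n + 1 + m - 1 = n + m := by omega
  rw [this]
  exact (Nat.choose_symm_add).symm

lemma finrank_homogeneous (n m : ℕ) :
    Module.finrank ℂ (homogeneousSubmodule (Fin (n + 1)) ℂ m) = Nat.choose (n + m) n := by
  have hspan : homogeneousSubmodule (Fin (n + 1)) ℂ m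
      = Submodule.span ℂ (Set.range fun β : Expo (n + 1) m => monomial β.1 (1 : ℂ)) := by
    apply le_antisymm
    · intro f hf
      rw [f.as_sum]
      refine Submodule.sum_mem _ fun β hβ => ?_
      have hdeg : β.degree = m := by
        by_contra h
        exact (mem_support_iff.1 hβ) (IsHomogeneous.coeff_eq_zero hf h)
      have : monomial β (coeff β f) = coeff β f • monomial β (1 : ℂ) := by
        rw [smul_monomial]; simp
      rw [this]
      exact Submodule.smul_mem _ _ (Submodule.subset_span ⟨⟨β, mem_expo.2 hdeg⟩, rfl⟩)
    · rw [Submodule.span_le]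
      rintro _ ⟨β, rfl⟩
      exact isHomogeneous_monomial _ (mem_expo.1 β.2)
  rw [hspan, finrank_span_eq_card, card_expo]
  have h := (basisMonomials (Fin (n + 1)) ℂ).linearIndependent
  rw [coe_basisMonomials] at h
  exact h.comp _ Subtype.val_injective

/-- An element of an ideal generated by forms of degree `e` agrees in degrees `≤ e` with a linear
combination of these forms. -/
lemma ideal_low_degree {e : ℕ} (S : Set (MvPolynomial (Fin N) ℂ))
    (hS : ∀ g ∈ S, g.IsHomogeneous e) (x : MvPolynomial (Fin N) ℂ) (hx : x ∈ Ideal.span S) :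
    ∃ v ∈ Submodule.span ℂ S, ∀ β : Fin N →₀ ℕ, β.degree ≤ e → coeff β x = coeff β v := by
  have hV : ∀ v ∈ Submodule.span ℂ S, v.IsHomogeneous e := by
    intro v hv
    exact (Submodule.span_le (p := homogeneousSubmodule (Fin N) ℂ e)).2 hS hv
  induction hx using Submodule.span_induction with
  | mem x h => exact ⟨x, Submodule.subset_span h, fun _ _ => rfl⟩
  | zero => exact ⟨0, zero_mem _, fun _ _ => rfl⟩
  | add x y _ _ hx hy =>
    obtain ⟨v, hv, hxv⟩ := hx
    obtain ⟨w, hw, hyw⟩ := hy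
    exact ⟨v + w, add_mem hv hw, fun β hβ => by rw [coeff_add, coeff_add, hxv β hβ, hyw β hβ]⟩
  | smul a x _ hx =>
    rw [smul_eq_mul]
    induction a using MvPolynomial.induction_on with
    | C c =>
      obtain ⟨v, hv, hxv⟩ := hx
      exact ⟨c • v, Submodule.smul_mem _ _ hv, fun β hβ => by
        rw [coeff_C_mul, coeff_smul, hxv β hβ, smul_eq_mul]⟩
    | add p q hp hq =>
      obtain ⟨v, hv, hxv⟩ := hp
      obtain ⟨w, hw, hyw⟩ := hq
      exact ⟨v + w, add_mem hv hw, fun β hβ => by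
        rw [add_mul, coeff_add, coeff_add, hxv β hβ, hyw β hβ]⟩
    | mul_X p i hp =>
      obtain ⟨v, hv, hxv⟩ := hp
      refine ⟨0, zero_mem _, fun β hβ => ?_⟩
      classical
      rw [mul_right_comm, coeff_mul_X', coeff_zero]
      split_ifs with hi
      · have hβi : β i ≠ 0 := Finsupp.mem_support_iff.1 hi
        have hle : Finsupp.single i 1 ≤ β := Finsupp.single_le_iff.2 (by omega)
        -- dividing by `X i` lowers the degree below `e`, where `v` has no terms
        have hdeg : (β - Finsupp.single i 1).degree + 1 = β.degree := by
          conv_rhs => rw [← tsub_add_cancel_of_le hle, map_add, Finsupp.degree_single]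
        rw [hxv _ (by omega)]
        exact (hV v hv).coeff_eq_zero (by omega)
      · rfl

lemma finrank_gradedPiece (I : Ideal (MvPolynomial (Fin N) ℂ)) (m : ℕ)
    (V : Submodule ℂ (MvPolynomial (Fin N) ℂ)) (hV : V ≤ homogeneousSubmodule (Fin N) ℂ m)
    (hI : ∀ x ∈ homogeneousSubmodule (Fin N) ℂ m, x ∈ I ↔ x ∈ V) :
    Module.finrank ℂ (gradedPiece I m) =
      Module.finrank ℂ (homogeneousSubmodule (Fin N) ℂ m) - Module.finrank ℂ V := by
  have : Module.Finite ℂ (homogeneousSubmodule (Fin N) ℂ m) :=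
    Module.Finite.iff_fg.2 (homogeneousSubmodule_fg (Fin N) ℂ m)
  set q := (Ideal.Quotient.mkₐ ℂ I).toLinearMap
  have h := LinearMap.finrank_range_add_finrank_ker
    (q.domRestrict (homogeneousSubmodule (Fin N) ℂ m))
  have hker : LinearMap.ker (q.domRestrict (homogeneousSubmodule (Fin N) ℂ m))
      = V.comap (homogeneousSubmodule (Fin N) ℂ m).subtype := by
    ext ⟨x, hx⟩
    rw [LinearMap.mem_ker, Submodule.mem_comap, Submodule.subtype_apply, ← hI x hx,
      LinearMap.domRestrict_apply]
    exact Ideal.Quotient.eq_zero_iff_mem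
  rw [hker, (Submodule.comapSubtypeEquivOfLe hV).finrank_eq, LinearMap.range_domRestrict] at h
  exact Nat.eq_sub_of_add_eq h

end Helpers

/-! ### The catalecticant determinant -/

/-- The matrix with entries `normCoeff (α + α' + (d - 2k)e₀) f`, `|α| = |α'| = k`. -/
noncomputable def momentMatrix (n d k : ℕ) (f : MvPolynomial (Fin (n + 1)) ℂ) :
    Matrix (Expo (n + 1) k) (Expo (n + 1) k) ℂ :=
  fun α α' => normCoeff (α.1 + (α'.1 + Finsupp.single 0 (d - 2 * k))) f

/-- The determinant of `momentMatrix`, as a polynomial in the coefficients of the form. -/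
noncomputable def momentDet (n d k : ℕ) : MvPolynomial (Fin (n + 1) →₀ ℕ) ℂ :=
  Matrix.det (Matrix.of fun α α' : Expo (n + 1) k =>
    C (∏ i, (((α.1 + (α'.1 + Finsupp.single 0 (d - 2 * k)) : Fin (n + 1) →₀ ℕ) i).factorial : ℂ)) *
      X (α.1 + (α'.1 + Finsupp.single 0 (d - 2 * k))))

lemma eval_momentDet (n d k : ℕ) (f : MvPolynomial (Fin (n + 1)) ℂ) :
    eval (fun α => f.coeff α) (momentDet n d k) = (momentMatrix n d k f).det := by
  unfold momentDet
  rw [RingHom.map_det]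
  congr 1
  ext α α'
  simp only [RingHom.mapMatrix_apply, Matrix.map_apply, Matrix.of_apply, momentMatrix, normCoeff]
  rw [map_mul, eval_C, eval_X]

lemma linearIndependent_pd {n d k : ℕ} (f : MvPolynomial (Fin (n + 1)) ℂ)
    (hdet : (momentMatrix n d k f).det ≠ 0) :
    LinearIndependent ℂ (fun α : Expo (n + 1) k => pd α.1 f) := by
  rw [Fintype.linearIndependent_iff]
  intro c hc
  have h : Matrix.vecMul c (momentMatrix n d k f) = 0 := by
    ext α'
    have h1 := congrArg (normCoeff (α'.1 + Finsupp.single 0 (d - 2 * k))) hc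
    rw [normCoeff_sum] at h1
    simp only [normCoeff_pd] at h1
    simpa [Matrix.vecMul, dotProduct, momentMatrix, normCoeff] using h1
  exact fun i => congrFun (Matrix.eq_zero_of_vecMul_eq_zero hdet h) i

/-! ### A form with nonzero determinant -/

/-- The grid `{1, …, k+1}^{n+1}`. -/
noncomputable def grid (n k : ℕ) : Finset (Fin (n + 1) → ℕ) :=
  Fintype.piFinset fun _ => Finset.Icc 1 (k + 1)

/-- The value at the point `p` of the monomial `x^γ`. -/
noncomputable def monoVal {n : ℕ} (p : Fin (n + 1) → ℕ) (γ : Fin (n + 1) →₀ ℕ) : ℂ :=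
  ∏ i, (p i : ℂ) ^ γ i

lemma monoVal_add {n : ℕ} (p : Fin (n + 1) → ℕ) (γ δ : Fin (n + 1) →₀ ℕ) :
    monoVal p (γ + δ) = monoVal p γ * monoVal p δ := by
  simp [monoVal, pow_add, Finset.prod_mul_distrib]

/-- The form of degree `d` with normalised coefficients `∑ p^γ`, `p` in the grid. -/
noncomputable def momentForm (n d k : ℕ) : MvPolynomial (Fin (n + 1)) ℂ :=
  ∑ γ ∈ (Finset.univ : Finset (Fin (n + 1))).finsuppAntidiag d,
    monomial γ ((∏ i, ((γ i).factorial : ℂ))⁻¹ * ∑ p ∈ grid n k, monoVal p γ)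

lemma momentForm_isHomogeneous (n d k : ℕ) : (momentForm n d k).IsHomogeneous d :=
  IsHomogeneous.sum _ _ _ fun _ hγ => isHomogeneous_monomial _ (mem_expo.1 hγ)

lemma normCoeff_momentForm (n d k : ℕ) (γ : Fin (n + 1) →₀ ℕ) (hγ : γ.degree = d) :
    normCoeff γ (momentForm n d k) = ∑ p ∈ grid n k, monoVal p γ := by
  classical
  unfold normCoeff momentForm
  rw [coeff_sum]
  simp only [coeff_monomial]
  rw [Finset.sum_ite_eq' _ γ, if_pos (mem_expo.2 hγ), mul_inv_cancel_left₀]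
  exact factorial_prod_ne_zero γ

/-- A form of degree `k` is determined by its values on the grid `{1, …, k+1}^{n+1}`. -/
lemma coeffs_eq_zero_of_grid {n k : ℕ} (c : Expo (n + 1) k → ℂ)
    (h : ∀ p ∈ grid n k, ∑ α, c α * monoVal p α.1 = 0) : c = 0 := by
  classical
  set g : MvPolynomial (Fin (n + 1)) ℂ := ∑ α, monomial α.1 (c α) with hg
  have hhom : g.IsHomogeneous k :=
    IsHomogeneous.sum _ _ _ fun α _ => isHomogeneous_monomial _ (mem_expo.1 α.2)
  have hcard : ((Finset.Icc 1 (k + 1)).image (fun m : ℕ => (m : ℂ))).card = k + 1 := by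
    rw [Finset.card_image_of_injective _ Nat.cast_injective]; simp
  have hg0 : g = 0 := by
    refine eq_zero_of_eval_zero_at_prod_finset g
      (fun _ => (Finset.Icc 1 (k + 1)).image (fun m : ℕ => (m : ℂ))) (fun i => ?_) fun x hx => ?_
    · rw [hcard]
      exact Nat.lt_succ_of_le ((degreeOf_le_totalDegree g i).trans hhom.totalDegree_le)
    · have hx' : ∀ i, ∃ m ∈ Finset.Icc 1 (k + 1), (m : ℂ) = x i := fun i =>
        Finset.mem_image.1 (hx i)
      choose p hp hpx using hx'
      rw [← h p (Fintype.mem_piFinset.2 hp), hg, map_sum]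
      refine Finset.sum_congr rfl fun α _ => ?_
      rw [eval_monomial, Finsupp.prod_fintype _ _ (by simp)]
      simp only [monoVal, hpx]
  ext α
  have h1 := congrArg (coeff α.1) hg0
  rw [hg, coeff_sum] at h1
  simpa [coeff_monomial, Subtype.coe_inj] using h1

lemma momentMatrix_det_ne_zero {n d k : ℕ} (hk : 2 * k ≤ d) :
    (momentMatrix n d k (momentForm n d k)).det ≠ 0 := by
  intro hdet
  obtain ⟨c, hc0, hc⟩ := Matrix.exists_vecMul_eq_zero_iff.2 hdet
  apply hc0
  set e : Fin (n + 1) →₀ ℕ := Finsupp.single 0 (d - 2 * k) with he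
  set G : (Fin (n + 1) → ℕ) → ℂ := fun p => ∑ α, c α * monoVal p α.1 with hG
  have hrow : ∀ α' : Expo (n + 1) k,
      ∑ p ∈ grid n k, monoVal p e * (G p * monoVal p α'.1) = 0 := by
    intro α'
    have h1 : ∑ α, c α * momentMatrix n d k (momentForm n d k) α α' = 0 := congrFun hc α'
    rw [← h1]
    simp only [hG, Finset.sum_mul, Finset.mul_sum]
    rw [Finset.sum_comm]
    refine Finset.sum_congr rfl fun α _ => ?_
    have hdeg : (α.1 + (α'.1 + e)).degree = d := by
      rw [map_add, map_add, mem_expo.1 α.2, mem_expo.1 α'.2, he, Finsupp.degree_single]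
      omega
    unfold momentMatrix
    rw [normCoeff_momentForm n d k _ hdeg, Finset.mul_sum]
    refine Finset.sum_congr rfl fun p _ => ?_
    rw [monoVal_add, monoVal_add]
    ring
  have hconj : ∀ p, (starRingEnd ℂ) (G p) = ∑ α, (starRingEnd ℂ) (c α) * monoVal p α.1 := by
    intro p
    simp [hG, monoVal]
  -- the Hermitian form attached to the weighted grid, evaluated at `c`
  have hsum : ∑ p ∈ grid n k, monoVal p e * (G p * (starRingEnd ℂ) (G p)) = 0 := by
    have h2 : ∑ α' : Expo (n + 1) k, (starRingEnd ℂ) (c α') *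
        ∑ p ∈ grid n k, monoVal p e * (G p * monoVal p α'.1) = 0 :=
      Finset.sum_eq_zero fun α' _ => by rw [hrow, mul_zero]
    rw [← h2]
    simp only [hconj, Finset.mul_sum]
    rw [Finset.sum_comm]
    exact Finset.sum_congr rfl fun _ _ => Finset.sum_congr rfl fun _ _ => by ring
  have hreal : ∑ p ∈ grid n k, (∏ i, (p i : ℝ) ^ e i) * Complex.normSq (G p) = 0 := by
    have h3 : ((∑ p ∈ grid n k, (∏ i, (p i : ℝ) ^ e i) * Complex.normSq (G p) : ℝ) : ℂ) = 0 := by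
      rw [← hsum]
      push_cast
      refine Finset.sum_congr rfl fun p _ => ?_
      rw [Complex.mul_conj]
      rfl
    exact_mod_cast h3
  apply coeffs_eq_zero_of_grid
  intro p hp
  have hnn : ∀ p ∈ grid n k, 0 ≤ (∏ i, (p i : ℝ) ^ e i) * Complex.normSq (G p) := fun p _ =>
    mul_nonneg (Finset.prod_nonneg fun i _ => by positivity) (Complex.normSq_nonneg _)
  have h4 := (Finset.sum_eq_zero_iff_of_nonneg hnn).1 hreal p hp
  have hpos : (∏ i, (p i : ℝ) ^ e i) ≠ 0 := by
    refine Finset.prod_ne_zero_iff.2 fun i _ => pow_ne_zero _ ?_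
    have := Finset.mem_Icc.1 (Fintype.mem_piFinset.1 hp i)
    exact_mod_cast (by omega : p i ≠ 0)
  exact Complex.normSq_eq_zero.1 ((mul_eq_zero.1 h4).resolve_left hpos)

/-- **Corollary.** For `n ≥ 1`, `d ≥ 2` and `1 ≤ k ≤ d/2` there is a nonempty
Zariski-open subset `U_{d,k}` of `R_d` (given by the nonvanishing of a polynomial `P` in
the coefficients, nonzero at some homogeneous `f₀` of degree `d`) such that for all
`f ∈ U_{d,k}`:  `dim M^k(f)_i = C(n+i,n)` for `i < d−k`, and
`dim M^k(f)_{d−k} = C(n+d−k,n) − C(n+k,n)`. -/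
theorem generic_higher_milnor_hilbert_function
    {n d k : ℕ} (hn : 1 ≤ n) (hd : 2 ≤ d) (hk1 : 1 ≤ k) (hk : 2 * k ≤ d) :
    ∃ P : MvPolynomial (Fin (n + 1) →₀ ℕ) ℂ,
      (∃ f₀ : MvPolynomial (Fin (n + 1)) ℂ, f₀.IsHomogeneous d ∧
        eval (fun α => f₀.coeff α) P ≠ 0) ∧
      ∀ f : MvPolynomial (Fin (n + 1)) ℂ, f.IsHomogeneous d →
        eval (fun α => f.coeff α) P ≠ 0 →
          (∀ i : ℕ, i < d - k →
            Module.finrank ℂ (gradedPiece (milnorIdeal f k) i) = Nat.choose (n + i) n) ∧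
          Module.finrank ℂ (gradedPiece (milnorIdeal f k) (d - k)) =
            Nat.choose (n + (d - k)) n - Nat.choose (n + k) n := by
  refine ⟨momentDet n d k, ⟨momentForm n d k, momentForm_isHomogeneous n d k, ?_⟩, ?_⟩
  · rw [eval_momentDet]
    exact momentMatrix_det_ne_zero hk
  intro f hf hdet
  rw [eval_momentDet] at hdet
  set S : Set (MvPolynomial (Fin (n + 1)) ℂ) :=
    {g | ∃ α : Fin (n + 1) → ℕ, (∑ i, α i) = k ∧ g = pd α f} with hS
  have hI : milnorIdeal f k = Ideal.span S := rfl
  have hrange : S = Set.range fun α : Expo (n + 1) k => pd α.1 f := by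
    ext g
    constructor
    · rintro ⟨α, hα, rfl⟩
      refine ⟨⟨Finsupp.equivFunOnFinite.symm α, mem_expo.2 ?_⟩, rfl⟩
      rw [Finsupp.degree_eq_sum]
      exact hα
    · rintro ⟨α, rfl⟩
      refine ⟨α.1, ?_, rfl⟩
      rw [← Finsupp.degree_eq_sum]
      exact mem_expo.1 α.2
  have hShom : ∀ g ∈ S, g.IsHomogeneous (d - k) := by
    rw [hrange]
    rintro _ ⟨α, rfl⟩
    exact pd_isHomogeneous α.1 (mem_expo.1 α.2) hf
  have hVle : Submodule.span ℂ S ≤ homogeneousSubmodule (Fin (n + 1)) ℂ (d - k) :=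
    Submodule.span_le.2 hShom
  have hlow := ideal_low_degree S hShom
  constructor
  · intro i hi
    rw [finrank_gradedPiece _ i ⊥ bot_le, finrank_homogeneous, finrank_bot, Nat.sub_zero]
    intro x hx
    refine ⟨fun hxI => ?_, fun hx0 => ?_⟩
    · obtain ⟨v, hv, hxv⟩ := hlow x hxI
      rw [Submodule.mem_bot]
      ext β
      rw [coeff_zero]
      by_cases hβ : β.degree = i
      · rw [hxv β (by omega)]
        exact IsHomogeneous.coeff_eq_zero (hVle hv) (by omega)
      · exact IsHomogeneous.coeff_eq_zero hx hβ
    · rw [(Submodule.mem_bot ℂ).1 hx0]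
      exact zero_mem _
  · rw [finrank_gradedPiece _ (d - k) (Submodule.span ℂ S) hVle, finrank_homogeneous, hrange,
      finrank_span_eq_card (linearIndependent_pd f hdet), card_expo]
    intro x hx
    refine ⟨fun hxI => ?_, fun hxV => ?_⟩
    · obtain ⟨v, hv, hxv⟩ := hlow x hxI
      have : x = v := by
        ext β
        by_cases hβ : β.degree = d - k
        · exact hxv β hβ.le
        · rw [IsHomogeneous.coeff_eq_zero hx hβ, IsHomogeneous.coeff_eq_zero (hVle hv) hβ]
      rwa [this]
    · exact Submodule.span_le_restrictScalars ℂ (MvPolynomial (Fin (n + 1)) ℂ) S hxV
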